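/- For all n ≥ 1 and all S ⊆ [2n-1], the flag h-vector of J(2 × n) satisfies β_n(S) = |{ w ∈ D_n : LS(w) = S }|; consequently the bi-statistic (lnfs, maj_ℓ) has the q-Narayana distribution: Σ_{w ∈ D_n, lnfs(w)=k} q^{maj_ℓ(w)} = N_q(n,k), where maj_ℓ(w) = Σ_{i ∈ LS(w)} i. -/

import Mathlib

/-!
The theorem rests on one recursion satisfied by three families of quantities indexed by the lattice
points `(a, b)` with `b ≤ a ≤ n`, namely
* `f (a+1, b+1) = f (a, b+1) + f (a+1, b) + (x_{a+b+1} - 1) f (a, b)` for `b < a`,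
* `f (a+1, a+1) = f (a+1, a)`, `f (a+1, 0) = f (a, 0)` and `f (0, 0) = 1`.

Two of the families are generating functions of ballot words with `a` letters `v` and `b` letters
`h`: a word `w` is weighted by `∏_{i ∈ Des w} x_i` (`ballotRec_des`) or by `∏_{i ∈ LS w} x_i`
(`ballotRec_ls`). In the first case the recursion is obtained by deleting a final `hv`, in the
second by deleting the last two letters of a final `vvh` or `hhv`. The third family, for
`x_i = 1` if `i ∈ T` and `x_i = 0` otherwise, counts the chains in `J(2 × n)` below the ideal with
rows of lengths `a` and `b` whose ranks are the elements of `T` below `a + b` (`ballotRec_chain`);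
there the recursion is inclusion–exclusion over the two coatoms of the ideal. As the recursion
determines `f` (`BallotRec.unique`), the families agree at `(n, n)`.

With `x` the indicator function of `T` this says `α_n(T) = #{w ∈ D_n : LS w ⊆ T}`
(`flagAlpha_eq`), and inclusion–exclusion over the subsets of `S` gives the formula for `β_n(S)`.
With `x_i = z q^i` it says that the pairs (number, sum) of the elements of `LS w` and of `Des w` are
equidistributed on `D_n`. In this specialisation the coefficient of `z^k` in the solution of the
recursion is `q^(k²) ([a, k] [b, k] - [a-1, k-1] [b+1, k+1])` with Gaussian binomials `[·, ·]`
(`desCoeff_eq`), and for `a = b = n` this is the product formula for `N_q(n, k)`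
(`qInt_mul_narCoeff`).
-/

open scoped Classical

open Finset

/-- The `i`-th letter (1-indexed) of a word `w`; `true` = vertical step `v`,
`false` = horizontal step `h`; junk value `false` out of range. -/
def ltr {m : ℕ} (w : Fin m → Bool) (i : ℕ) : Bool :=
  if h : 1 ≤ i ∧ i ≤ m then w ⟨i - 1, by omega⟩ else false

/-- The number of occurrences of the letter `b` among the first `i` letters of `w`. -/
def pcnt {m : ℕ} (w : Fin m → Bool) (b : Bool) (i : ℕ) : ℕ :=
  ((Finset.Icc 1 i).filter fun j => ltr w j = b).card

/-- `w` is a Dyck path of length `2n`: `n` vertical steps and every prefix has at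
least as many `v`'s as `h`'s. -/
def IsDyck (n : ℕ) (w : Fin (2 * n) → Bool) : Prop :=
  pcnt w true (2 * n) = n ∧ ∀ i ≤ 2 * n, pcnt w false i ≤ pcnt w true i

/-- The descent (valley) set of `w`: positions `i` with `w_i = h`, `w_{i+1} = v`. -/
def Des {n : ℕ} (w : Fin (2 * n) → Bool) : Finset ℕ :=
  (Finset.Icc 1 (2 * n - 1)).filter fun i => ltr w i = false ∧ ltr w (i + 1) = true

/-- The set of long non-final sequences of `w`: positions `2 ≤ i ≤ 2n-1` with
`w_{i-1} w_i w_{i+1} = vvh` or `hhv`. -/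
def LSset {n : ℕ} (w : Fin (2 * n) → Bool) : Finset ℕ :=
  (Finset.Icc 2 (2 * n - 1)).filter fun i =>
    ltr w (i - 1) = ltr w i ∧ ltr w i ≠ ltr w (i + 1)

/-- The flag `f`-vector of the distributive lattice `J(2 × n)` of order ideals
(lower sets) of `2 × n`: the number of chains of lower sets whose set of ranks
(cardinalities) is `S`. -/
noncomputable def flagAlpha (n : ℕ) (S : Finset ℕ) : ℕ :=
  Nat.card {C : Finset (Finset (Fin 2 × Fin n)) //
    (∀ I ∈ C, IsLowerSet (↑I : Set (Fin 2 × Fin n))) ∧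
    IsChain (· ⊆ ·) (↑C : Set (Finset (Fin 2 × Fin n))) ∧
    C.image Finset.card = S}

/-- The flag `h`-vector of `J(2 × n)`. -/
noncomputable def flagBeta (n : ℕ) (S : Finset ℕ) : ℤ :=
  ∑ T ∈ S.powerset, (-1 : ℤ) ^ (S.card - T.card) * (flagAlpha n T : ℤ)

/-- The `q`-integer `[m]_q = 1 + q + ⋯ + q^{m-1}` as a polynomial. -/
noncomputable def qInt (m : ℕ) : Polynomial ℚ :=
  ∑ i ∈ Finset.range m, Polynomial.X ^ i

/-- The `q`-factorial `[m]_q!`. -/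
noncomputable def qFact : ℕ → Polynomial ℚ
  | 0 => 1
  | m + 1 => qInt (m + 1) * qFact m

/-- Inclusion of polynomials into rational functions. -/
noncomputable def toRF (p : Polynomial ℚ) : RatFunc ℚ :=
  algebraMap (Polynomial ℚ) (RatFunc ℚ) p

/-- The Gaussian binomial coefficient `[n]_q! / ([k]_q! [n-k]_q!)`. -/
noncomputable def qbinom (n k : ℕ) : RatFunc ℚ :=
  toRF (qFact n) / (toRF (qFact k) * toRF (qFact (n - k)))

/-! ### Ballot words -/

/-- Append the letter `c` to the word `u`. -/
def app {m : ℕ} (u : Fin m → Bool) (c : Bool) : Fin (m + 1) → Bool :=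
  Fin.snoc (α := fun _ => Bool) u c

lemma sum_app {M : Type*} [AddCommMonoid M] {m : ℕ} (g : (Fin (m + 1) → Bool) → M) :
    ∑ w, g w = ∑ u : Fin m → Bool, (g (app u true) + g (app u false)) := by
  rw [← (Fin.snocEquiv (fun _ : Fin (m + 1) => Bool)).sum_comp, Fintype.sum_prod_type_right]
  refine Finset.sum_congr rfl fun u _ => ?_
  simp [Fin.snocEquiv, app]

lemma ltr_app_of_le {m i : ℕ} (u : Fin m → Bool) (c : Bool) (h : i ≤ m) :
    ltr (app u c) i = ltr u i := by
  unfold ltr app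
  by_cases h1 : 1 ≤ i
  · rw [dif_pos ⟨h1, by omega⟩, dif_pos ⟨h1, h⟩]
    simp only [Fin.snoc]
    rw [dif_pos (show i - 1 < m by omega)]
    rfl
  · rw [dif_neg (by omega), dif_neg (by omega)]

lemma ltr_app_last {m : ℕ} (u : Fin m → Bool) (c : Bool) :
    ltr (app u c) (m + 1) = c := by
  unfold ltr app
  simp [Fin.snoc]

lemma pcnt_app_of_le {m i : ℕ} (u : Fin m → Bool) (c b : Bool) (h : i ≤ m) :
    pcnt (app u c) b i = pcnt u b i := by
  unfold pcnt
  congr 1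
  refine Finset.filter_congr fun j hj => ?_
  rw [ltr_app_of_le _ _ (by simp at hj; omega)]

lemma pcnt_app_last {m : ℕ} (u : Fin m → Bool) (c b : Bool) :
    pcnt (app u c) b (m + 1) = pcnt u b m + if c = b then 1 else 0 := by
  rw [← pcnt_app_of_le u c b le_rfl]
  unfold pcnt
  rw [← Finset.insert_Icc_right_eq_Icc_add_one (by omega : 1 ≤ m + 1), Finset.filter_insert,
    ltr_app_last]
  split_ifs with h
  · rw [Finset.card_insert_of_notMem (by simp)]
  · rfl

lemma pcnt_add {m : ℕ} (w : Fin m → Bool) (i : ℕ) : pcnt w true i + pcnt w false i = i := by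
  have h := Finset.card_filter_add_card_filter_not (s := Finset.Icc 1 i) (fun j => ltr w j = true)
  simpa [pcnt] using h

/-- `w` is a ballot word (every prefix has at least as many `v`'s as `h`'s) with `a` letters `v`
and `b` letters `h`. -/
def IsBallot {m : ℕ} (a b : ℕ) (w : Fin m → Bool) : Prop :=
  (∀ i ≤ m, pcnt w false i ≤ pcnt w true i) ∧ pcnt w true m = a ∧ pcnt w false m = b

lemma IsBallot.le {m a b : ℕ} {w : Fin m → Bool} (h : IsBallot a b w) : b ≤ a := by
  obtain ⟨h1, rfl, rfl⟩ := h
  exact h1 m le_rfl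

lemma isDyck_iff {n : ℕ} (w : Fin (2 * n) → Bool) : IsDyck n w ↔ IsBallot n n w := by
  have := pcnt_add w (2 * n)
  unfold IsDyck IsBallot
  constructor
  · rintro ⟨h1, h2⟩
    exact ⟨h2, h1, by omega⟩
  · rintro ⟨h1, h2, -⟩
    exact ⟨h2, h1⟩

lemma isBallot_app {m a b : ℕ} (u : Fin m → Bool) (c : Bool) :
    IsBallot a b (app u c) ↔
      (∀ i ≤ m, pcnt u false i ≤ pcnt u true i) ∧ b ≤ a ∧
        pcnt u true m + (if c = true then 1 else 0) = a ∧
        pcnt u false m + (if c = false then 1 else 0) = b := by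
  unfold IsBallot
  rw [pcnt_app_last, pcnt_app_last]
  constructor
  · rintro ⟨h1, h2, h3⟩
    refine ⟨fun i hi => ?_, ?_, h2, h3⟩
    · have := h1 i (by omega)
      rwa [pcnt_app_of_le _ _ _ hi, pcnt_app_of_le _ _ _ hi] at this
    · have := h1 (m + 1) le_rfl
      rw [pcnt_app_last, pcnt_app_last] at this
      omega
  · rintro ⟨h1, h2, h3, h4⟩
    refine ⟨fun i hi => ?_, h3, h4⟩
    rcases Nat.lt_or_ge m i with h | h
    · obtain rfl : i = m + 1 := by omega
      rw [pcnt_app_last, pcnt_app_last]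
      omega
    · rw [pcnt_app_of_le _ _ _ h, pcnt_app_of_le _ _ _ h]
      exact h1 i h

lemma isBallot_app_true {m a b : ℕ} (u : Fin m → Bool) :
    IsBallot (a + 1) b (app u true) ↔ IsBallot a b u := by
  rw [isBallot_app]
  unfold IsBallot
  simp only [if_true, Bool.true_eq_false, if_false, add_zero, Nat.add_right_cancel_iff]
  constructor
  · rintro ⟨h1, -, h2, h3⟩; exact ⟨h1, h2, h3⟩
  · rintro ⟨h1, h2, h3⟩; exact ⟨h1, by have := h1 m le_rfl; omega, h2, h3⟩

lemma isBallot_app_false {m a b : ℕ} (u : Fin m → Bool) :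
    IsBallot a (b + 1) (app u false) ↔ b < a ∧ IsBallot a b u := by
  rw [isBallot_app]
  unfold IsBallot
  simp only [if_true, Bool.false_eq_true, if_false, add_zero, Nat.add_right_cancel_iff]
  constructor
  · rintro ⟨h1, h, h2, h3⟩; exact ⟨by omega, h1, h2, h3⟩
  · rintro ⟨h, h1, h2, h3⟩; exact ⟨h1, by omega, h2, h3⟩

lemma not_isBallot_zero_app_false {m a : ℕ} (u : Fin m → Bool) :
    ¬ IsBallot a 0 (app u false) := by
  rw [isBallot_app]; simp

/-- A ballot word that ends on the diagonal does not end in `v`. -/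
lemma IsBallot.last_ne_true {m a : ℕ} {w : Fin m → Bool} (h : IsBallot a a w) :
    ltr w m ≠ true := by
  cases m with
  | zero => simp [ltr]
  | succ m =>
    intro hl
    obtain ⟨u, c, rfl⟩ : ∃ u c, w = app u c :=
      ⟨fun i => w i.castSucc, w (Fin.last m), (Fin.snoc_init_self w).symm⟩
    rw [ltr_app_last] at hl
    subst hl
    rw [isBallot_app] at h
    have := h.1 m le_rfl
    simp at h
    omega

lemma IsBallot.last_ne_false {m a : ℕ} {w : Fin m → Bool} (h : IsBallot a 0 w) (hm : 1 ≤ m) :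
    ltr w m ≠ false := by
  intro hl
  have h0 := h.2.2
  unfold pcnt at h0
  rw [Finset.card_eq_zero] at h0
  have : m ∈ (Finset.Icc 1 m).filter fun j => ltr w j = false := by simp [hl, hm]
  rw [h0] at this
  simp at this

/-- The set of positions `i` with `w_i = h`, `w_{i+1} = v`, for a word of any length. -/
def desPos (m : ℕ) (w : Fin m → Bool) : Finset ℕ :=
  (Finset.Icc 1 (m - 1)).filter fun i => ltr w i = false ∧ ltr w (i + 1) = true

/-- The set of middle positions of the factors `vvh` and `hhv`, for a word of any length. -/
def lsPos (m : ℕ) (w : Fin m → Bool) : Finset ℕ :=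
  (Finset.Icc 2 (m - 1)).filter fun i =>
    ltr w (i - 1) = ltr w i ∧ ltr w i ≠ ltr w (i + 1)

lemma Des_eq {n : ℕ} (w : Fin (2 * n) → Bool) : Des w = desPos (2 * n) w := rfl

lemma LSset_eq {n : ℕ} (w : Fin (2 * n) → Bool) : LSset w = lsPos (2 * n) w := rfl

/-! ### Generating functions of ballot words and their recursion -/

section Recursion

variable {R : Type*} [CommRing R]

lemma prod_desPos_app (x : ℕ → R) {m : ℕ} (u : Fin m → Bool) (c : Bool) :
    ∏ i ∈ desPos (m + 1) (app u c), x i =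
      (if 1 ≤ m ∧ ltr u m = false ∧ c = true then x m else 1) * ∏ i ∈ desPos m u, x i := by
  have hnot : m ∉ desPos m u := by
    simp only [desPos, Finset.mem_filter, Finset.mem_Icc]; omega
  have key : desPos (m + 1) (app u c) =
      if 1 ≤ m ∧ ltr u m = false ∧ c = true then insert m (desPos m u) else desPos m u := by
    ext i
    rcases lt_trichotomy i m with h | rfl | h
    · have : i ∈ desPos (m + 1) (app u c) ↔ i ∈ desPos m u := by
        simp only [desPos, Finset.mem_filter, Finset.mem_Icc]
        rw [ltr_app_of_le _ _ h.le, ltr_app_of_le _ _ (by omega : i + 1 ≤ m)]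
        refine and_congr_left fun _ => by omega
      split_ifs <;> simp [this, h.ne]
    · have : i ∈ desPos (i + 1) (app u c) ↔ 1 ≤ i ∧ ltr u i = false ∧ c = true := by
        simp only [desPos, Finset.mem_filter, Finset.mem_Icc]
        rw [ltr_app_of_le _ _ le_rfl, ltr_app_last]
        refine and_congr_left fun _ => by omega
      rw [this]
      split_ifs with h <;> simp [h, hnot]
    · have h1 : i ∉ desPos (m + 1) (app u c) := by
        simp only [desPos, Finset.mem_filter, Finset.mem_Icc]; omega
      have h2 : i ∉ desPos m u := by
        simp only [desPos, Finset.mem_filter, Finset.mem_Icc]; omega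
      split_ifs <;> simp [h1, h2, h.ne']
  rw [key]
  split_ifs
  · rw [Finset.prod_insert hnot]
  · rw [one_mul]

lemma prod_lsPos_app (x : ℕ → R) {m : ℕ} (u : Fin m → Bool) (c : Bool) :
    ∏ i ∈ lsPos (m + 1) (app u c), x i =
      (if 2 ≤ m ∧ ltr u (m - 1) = ltr u m ∧ ltr u m ≠ c then x m else 1) *
        ∏ i ∈ lsPos m u, x i := by
  have hnot : m ∉ lsPos m u := by
    simp only [lsPos, Finset.mem_filter, Finset.mem_Icc]; omega
  have key : lsPos (m + 1) (app u c) =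
      if 2 ≤ m ∧ ltr u (m - 1) = ltr u m ∧ ltr u m ≠ c
        then insert m (lsPos m u) else lsPos m u := by
    ext i
    rcases lt_trichotomy i m with h | rfl | h
    · have : i ∈ lsPos (m + 1) (app u c) ↔ i ∈ lsPos m u := by
        simp only [lsPos, Finset.mem_filter, Finset.mem_Icc]
        rw [ltr_app_of_le _ _ h.le, ltr_app_of_le _ _ (by omega : i + 1 ≤ m),
          ltr_app_of_le _ _ (by omega : i - 1 ≤ m)]
        refine and_congr_left fun _ => by omega
      split_ifs <;> simp [this, h.ne]
    · have : i ∈ lsPos (i + 1) (app u c) ↔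
          2 ≤ i ∧ ltr u (i - 1) = ltr u i ∧ ltr u i ≠ c := by
        simp only [lsPos, Finset.mem_filter, Finset.mem_Icc]
        rw [ltr_app_of_le _ _ le_rfl, ltr_app_last, ltr_app_of_le _ _ (by omega : i - 1 ≤ i)]
        refine and_congr_left fun _ => by omega
      rw [this]
      split_ifs with h <;> simp [h, hnot]
    · have h1 : i ∉ lsPos (m + 1) (app u c) := by
        simp only [lsPos, Finset.mem_filter, Finset.mem_Icc]; omega
      have h2 : i ∉ lsPos m u := by
        simp only [lsPos, Finset.mem_filter, Finset.mem_Icc]; omega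
      split_ifs <;> simp [h1, h2, h.ne']
  rw [key]
  split_ifs
  · rw [Finset.prod_insert hnot]
  · rw [one_mul]

/-- The generating function of the ballot words with `a` letters `v` and `b` letters `h`, where a
word `w` has weight `∏ i ∈ pos w, x i`. The length `m` is a separate argument to avoid casts; the
sum is of interest for `m = a + b` and empty otherwise. -/
noncomputable def ballotGF (pos : ∀ m, (Fin m → Bool) → Finset ℕ) (x : ℕ → R) (m a b : ℕ) : R :=
  ∑ w : Fin m → Bool, if IsBallot a b w then ∏ i ∈ pos m w, x i else 0

/-- The recursion shared by the three generating functions, on the lattice points `(a, b)` with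
`b ≤ a ≤ n`. It determines `f` there (`BallotRec.unique`). -/
structure BallotRec (n : ℕ) (x : ℕ → R) (f : ℕ → ℕ → R) : Prop where
  zero : f 0 0 = 1
  bottom : ∀ a, a < n → f (a + 1) 0 = f a 0
  diag : ∀ a, a < n → f (a + 1) (a + 1) = f (a + 1) a
  step : ∀ a b, a < n → b < a →
    f (a + 1) (b + 1) = f a (b + 1) + f (a + 1) b + (x (a + b + 1) - 1) * f a b

/-- Every point `(a, b)` with `b ≤ a` falls under exactly one of the clauses of the recursion, and
the points on the right-hand sides are again in the region and have smaller `a + b`. -/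
lemma BallotRec.unique {n : ℕ} {x : ℕ → R} {f g : ℕ → ℕ → R}
    (hf : BallotRec n x f) (hg : BallotRec n x g) :
    ∀ a b, b ≤ a → a ≤ n → f a b = g a b := by
  suffices ∀ s a b, a + b = s → b ≤ a → a ≤ n → f a b = g a b from
    fun a b => this _ a b rfl
  intro s
  induction s using Nat.strong_induction_on with
  | _ s ih =>
    rintro (_ | a) (_ | b) hs hb ha
    · rw [hf.zero, hg.zero]
    · omega
    · rw [hf.bottom a ha, hg.bottom a ha]
      exact ih _ (by omega) _ _ rfl (by omega) (by omega)
    · rcases Nat.lt_or_ge b a with h | h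
      · rw [hf.step a b ha h, hg.step a b ha h,
          ih _ (by omega) a (b + 1) rfl (by omega) (by omega),
          ih _ (by omega) (a + 1) b rfl (by omega) (by omega),
          ih _ (by omega) a b rfl (by omega) (by omega)]
      · obtain rfl : b = a := by omega
        rw [hf.diag b ha, hg.diag b ha]
        exact ih _ (by omega) _ _ rfl (by omega) (by omega)

lemma ballotGF_eq_zero (pos : ∀ m, (Fin m → Bool) → Finset ℕ) (x : ℕ → R) {m a b : ℕ}
    (h : a < b) : ballotGF pos x m a b = 0 := by
  refine Finset.sum_eq_zero fun w _ => if_neg fun hw => ?_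
  have := hw.le
  omega

lemma isBallot_empty (w : Fin 0 → Bool) : IsBallot 0 0 w := by
  refine ⟨fun i hi => ?_, ?_, ?_⟩
  · obtain rfl : i = 0 := by omega
    simp [pcnt]
  · simp [pcnt]
  · simp [pcnt]

lemma des_zero (x : ℕ → R) : ballotGF desPos x 0 0 0 = 1 := by
  simp [ballotGF, isBallot_empty, desPos]

lemma ls_zero (x : ℕ → R) : ballotGF lsPos x 0 0 0 = 1 := by
  simp [ballotGF, isBallot_empty, lsPos]

lemma des_bottom (x : ℕ → R) (m a : ℕ) :
    ballotGF desPos x (m + 1) (a + 1) 0 = ballotGF desPos x m a 0 := by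
  unfold ballotGF
  rw [sum_app]
  refine Finset.sum_congr rfl fun u _ => ?_
  rw [if_neg (not_isBallot_zero_app_false u), add_zero, isBallot_app_true]
  split_ifs with h
  · rw [prod_desPos_app, if_neg, one_mul]
    rintro ⟨h1, h2, -⟩
    exact h.last_ne_false h1 h2
  · rfl

lemma ls_bottom (x : ℕ → R) (m a : ℕ) :
    ballotGF lsPos x (m + 1) (a + 1) 0 = ballotGF lsPos x m a 0 := by
  unfold ballotGF
  rw [sum_app]
  refine Finset.sum_congr rfl fun u _ => ?_
  rw [if_neg (not_isBallot_zero_app_false u), add_zero, isBallot_app_true]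
  split_ifs with h
  · rw [prod_lsPos_app, if_neg, one_mul]
    rintro ⟨h1, -, h3⟩
    have := h.last_ne_false (by omega)
    simp_all
  · rfl

/-- Only `b < a` allows the last two letters `hv`; deleting them leaves an arbitrary ballot word
ending at `(a, b)` and changes no other descent. -/
lemma des_step (x : ℕ → R) (m a b : ℕ) (hb : b ≤ a) :
    ballotGF desPos x (m + 2) (a + 1) (b + 1) =
      ballotGF desPos x (m + 1) a (b + 1) + ballotGF desPos x (m + 1) (a + 1) b +
        if b < a then (x (m + 1) - 1) * ballotGF desPos x m a b else 0 := by
  have e : ballotGF desPos x (m + 2) (a + 1) (b + 1) =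
      ∑ w : Fin (m + 1) → Bool,
        (((if IsBallot a (b + 1) w then ∏ i ∈ desPos (m + 1) w, x i else 0) +
          (if IsBallot (a + 1) b w then ∏ i ∈ desPos (m + 1) w, x i else 0)) +
          (if IsBallot a (b + 1) w ∧ ltr w (m + 1) = false then
            (x (m + 1) - 1) * ∏ i ∈ desPos (m + 1) w, x i else 0)) := by
    unfold ballotGF
    rw [sum_app]
    refine Finset.sum_congr rfl fun w _ => ?_
    rw [isBallot_app_true, isBallot_app_false, prod_desPos_app, prod_desPos_app]
    have : b < a + 1 := by omega
    simp only [this, true_and]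
    by_cases h1 : IsBallot a (b + 1) w <;> by_cases h2 : IsBallot (a + 1) b w <;>
      by_cases h3 : ltr w (m + 1) = false <;> simp [h1, h2, h3] <;> ring
  rw [e, Finset.sum_add_distrib, Finset.sum_add_distrib]
  change ballotGF desPos x (m + 1) a (b + 1) + ballotGF desPos x (m + 1) (a + 1) b + _ = _
  congr 1
  rw [sum_app]
  simp only [isBallot_app_false, ltr_app_last, Bool.true_eq_false, and_false, if_false, zero_add,
    and_true]
  split_ifs with h
  · unfold ballotGF
    rw [Finset.mul_sum]
    refine Finset.sum_congr rfl fun u _ => ?_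
    simp only [h, true_and]
    split_ifs
    · rw [prod_desPos_app]; simp
    · simp
  · simp [h]

/-- A final factor `ccd` with `d ≠ c` is obtained from an arbitrary ballot word ending at `(a, b)`
by repeating its last letter `c` and then appending `d`; this changes no other long non-final
sequence. On the diagonal `b = a` the repeated letter would be `h`, leaving the ballot region. -/
lemma ls_step (x : ℕ → R) (m a b : ℕ) (hb : b ≤ a) (hm : m = a + b) :
    ballotGF lsPos x (m + 2) (a + 1) (b + 1) =
      ballotGF lsPos x (m + 1) a (b + 1) + ballotGF lsPos x (m + 1) (a + 1) b +
        if b < a then (x (m + 1) - 1) * ballotGF lsPos x m a b else 0 := by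
  have e : ballotGF lsPos x (m + 2) (a + 1) (b + 1) =
      ∑ w : Fin (m + 1) → Bool,
        (((if IsBallot a (b + 1) w then ∏ i ∈ lsPos (m + 1) w, x i else 0) +
          (if IsBallot (a + 1) b w then ∏ i ∈ lsPos (m + 1) w, x i else 0)) +
          ((if IsBallot a (b + 1) w ∧ 1 ≤ m ∧ ltr w m = ltr w (m + 1) ∧ ltr w (m + 1) = false then
            (x (m + 1) - 1) * ∏ i ∈ lsPos (m + 1) w, x i else 0) +
          (if IsBallot (a + 1) b w ∧ 1 ≤ m ∧ ltr w m = ltr w (m + 1) ∧ ltr w (m + 1) = true then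
            (x (m + 1) - 1) * ∏ i ∈ lsPos (m + 1) w, x i else 0))) := by
    unfold ballotGF
    rw [sum_app]
    refine Finset.sum_congr rfl fun w _ => ?_
    rw [isBallot_app_true, isBallot_app_false, prod_lsPos_app, prod_lsPos_app]
    have : b < a + 1 := by omega
    have h2m : 2 ≤ m + 1 ↔ 1 ≤ m := by omega
    simp only [this, true_and, h2m, Nat.add_sub_cancel]
    by_cases h1 : IsBallot a (b + 1) w <;> by_cases h2 : IsBallot (a + 1) b w <;>
      by_cases h4 : 1 ≤ m <;> by_cases h5 : ltr w m = ltr w (m + 1) <;>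
      cases h3 : ltr w (m + 1) <;> simp_all <;> ring
  rw [e, Finset.sum_add_distrib, Finset.sum_add_distrib]
  change ballotGF lsPos x (m + 1) a (b + 1) + ballotGF lsPos x (m + 1) (a + 1) b + _ = _
  congr 1
  rw [sum_app]
  simp only [isBallot_app_false, isBallot_app_true, ltr_app_last, Bool.true_eq_false,
    Bool.false_eq_true, and_false, if_false, zero_add, add_zero, and_true,
    ltr_app_of_le _ _ (le_refl m)]
  split_ifs with h
  · unfold ballotGF
    rw [Finset.mul_sum]
    refine Finset.sum_congr rfl fun u _ => ?_
    have h1 : 1 ≤ m := by omega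
    rw [prod_lsPos_app, prod_lsPos_app]
    by_cases hB : IsBallot a b u <;> cases ltr u m <;> simp [hB, h, h1]
  · obtain rfl : b = a := by omega
    refine Finset.sum_eq_zero fun u _ => ?_
    rw [if_neg (by rintro ⟨h1, -, h2⟩; exact h1.last_ne_true h2), if_neg (by tauto), add_zero]

theorem ballotRec_des (n : ℕ) (x : ℕ → R) :
    BallotRec n x (fun a b => ballotGF desPos x (a + b) a b) where
  zero := des_zero x
  bottom a _ := des_bottom x a a
  diag a _ := by
    have h := des_step x (a + a) a a le_rfl
    rw [if_neg (lt_irrefl a), add_zero, ballotGF_eq_zero _ _ (Nat.lt_succ_self a), zero_add] at h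
    rw [show a + 1 + (a + 1) = a + a + 2 by ring, show a + 1 + a = a + a + 1 by ring, h]
  step a b _ hb := by
    have h := des_step x (a + b) a b hb.le
    rw [if_pos hb] at h
    rw [show a + 1 + (b + 1) = a + b + 2 by ring, show a + 1 + b = a + b + 1 by ring,
      show a + (b + 1) = a + b + 1 by ring, h]

theorem ballotRec_ls (n : ℕ) (x : ℕ → R) :
    BallotRec n x (fun a b => ballotGF lsPos x (a + b) a b) where
  zero := ls_zero x
  bottom a _ := ls_bottom x a a
  diag a _ := by
    have h := ls_step x (a + a) a a le_rfl rfl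
    rw [if_neg (lt_irrefl a), add_zero, ballotGF_eq_zero _ _ (Nat.lt_succ_self a), zero_add] at h
    rw [show a + 1 + (a + 1) = a + a + 2 by ring, show a + 1 + a = a + a + 1 by ring, h]
  step a b _ hb := by
    have h := ls_step x (a + b) a b hb.le rfl
    rw [if_pos hb] at h
    rw [show a + 1 + (b + 1) = a + b + 2 by ring, show a + 1 + b = a + b + 1 by ring,
      show a + (b + 1) = a + b + 1 by ring, h]

end Recursion

/-! ### Chains of lower sets of `2 × n` -/

/-- The lower set of `2 × n` with `a` elements in the bottom row and `b` in the top row. -/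
def ideal (n a b : ℕ) : Finset (Fin 2 × Fin n) :=
  Finset.univ.filter fun p => p.2.val < if p.1 = 0 then a else b

lemma mem_ideal {n a b : ℕ} {p : Fin 2 × Fin n} :
    p ∈ ideal n a b ↔ p.2.val < if p.1 = 0 then a else b := by simp [ideal]

lemma card_ideal {n a b : ℕ} (ha : a ≤ n) (hb : b ≤ n) : (ideal n a b).card = a + b := by
  have key : ∀ c ≤ n, ((Finset.univ : Finset (Fin n)).filter fun j => j.val < c).card = c := by
    intro c hc
    rw [Fin.card_filter_val_lt]; omega
  have e : ideal n a b =
      ({0} ×ˢ (Finset.univ : Finset (Fin n)).filter fun j => j.val < a) ∪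
      ({1} ×ˢ (Finset.univ : Finset (Fin n)).filter fun j => j.val < b) := by
    ext ⟨i, j⟩
    fin_cases i <;> simp [mem_ideal]
  rw [e, Finset.card_union_of_disjoint, Finset.card_product, Finset.card_product, key a ha,
    key b hb]
  · simp
  · rw [Finset.disjoint_left]
    rintro ⟨i, j⟩ h1 h2
    simp at h1 h2
    omega

lemma ideal_subset_iff {n a b a' b' : ℕ} (ha : a ≤ n) (hb : b ≤ n) :
    ideal n a b ⊆ ideal n a' b' ↔ a ≤ a' ∧ b ≤ b' := by
  constructor
  · intro h
    constructor
    · by_contra hc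
      have := @h (0, ⟨a', by omega⟩) (by rw [mem_ideal]; simp; omega)
      simp [mem_ideal] at this
    · by_contra hc
      have := @h (1, ⟨b', by omega⟩) (by rw [mem_ideal]; simp; omega)
      simp [mem_ideal] at this
  · rintro ⟨h1, h2⟩ p hp
    rw [mem_ideal] at hp ⊢
    split_ifs at hp ⊢ <;> omega

lemma isLowerSet_ideal {n a b : ℕ} (h : b ≤ a) :
    IsLowerSet (↑(ideal n a b) : Set (Fin 2 × Fin n)) := by
  rintro ⟨i, j⟩ ⟨i', j'⟩ hle hp
  rw [Finset.mem_coe, mem_ideal] at hp ⊢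
  obtain ⟨h1, h2⟩ := Prod.mk_le_mk.1 hle
  rw [Fin.le_def] at h1 h2
  fin_cases i <;> fin_cases i' <;> simp_all <;> omega

/-- A lower set of a finite chain is an initial segment. -/
lemma exists_initial {n : ℕ} (P : Fin n → Prop) (hP : ∀ i j : Fin n, i ≤ j → P j → P i) :
    ∃ c ≤ n, ∀ j : Fin n, P j ↔ j.val < c := by
  by_cases h : ∃ c, ∃ hc : c < n, ¬ P ⟨c, hc⟩
  · obtain ⟨hc, hP'⟩ := Nat.find_spec h
    refine ⟨Nat.find h, hc.le, fun j => ⟨fun hj => ?_, fun hj => ?_⟩⟩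
    · by_contra hle
      exact hP' (hP _ j (Fin.le_def.2 (not_lt.1 hle)) hj)
    · by_contra hj'
      exact Nat.find_min h hj ⟨j.2, hj'⟩
  · push Not at h
    exact ⟨n, le_rfl, fun j => ⟨fun _ => j.2, fun _ => h j.1 j.2⟩⟩

lemma exists_eq_ideal {n : ℕ} {I : Finset (Fin 2 × Fin n)}
    (hI : IsLowerSet (↑I : Set (Fin 2 × Fin n))) :
    ∃ a b, b ≤ a ∧ a ≤ n ∧ I = ideal n a b := by
  obtain ⟨a, ha, ha'⟩ := exists_initial (fun j => ((0 : Fin 2), j) ∈ I)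
    fun i j hij hj => hI (Prod.mk_le_mk.2 ⟨le_rfl, hij⟩) hj
  obtain ⟨b, hb, hb'⟩ := exists_initial (fun j => ((1 : Fin 2), j) ∈ I)
    fun i j hij hj => hI (Prod.mk_le_mk.2 ⟨le_rfl, hij⟩) hj
  refine ⟨a, b, ?_, ha, ?_⟩
  · by_contra hc
    have h1 : ((1 : Fin 2), (⟨a, by omega⟩ : Fin n)) ∈ I := (hb' _).2 (by simp; omega)
    have h0 : ((0 : Fin 2), (⟨a, by omega⟩ : Fin n)) ∈ I :=
      hI (Prod.mk_le_mk.2 ⟨by decide, le_rfl⟩) h1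
    have := (ha' _).1 h0
    simp at this
  · ext ⟨i, j⟩
    rw [mem_ideal]
    fin_cases i
    · simpa using ha' j
    · simpa using hb' j

/-- The chains of lower sets of `2 × n` with rank set `S` all of whose members lie in `p`. -/
noncomputable def chainsBelow (n : ℕ) (S : Finset ℕ) (p : Finset (Fin 2 × Fin n)) :
    Finset (Finset (Finset (Fin 2 × Fin n))) :=
  Finset.univ.filter fun C =>
    (∀ I ∈ C, IsLowerSet (↑I : Set (Fin 2 × Fin n))) ∧
    IsChain (· ⊆ ·) (↑C : Set (Finset (Fin 2 × Fin n))) ∧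
    C.image Finset.card = S ∧ ∀ I ∈ C, I ⊆ p

lemma mem_chainsBelow {n : ℕ} {S : Finset ℕ} {p : Finset (Fin 2 × Fin n)}
    {C : Finset (Finset (Fin 2 × Fin n))} :
    C ∈ chainsBelow n S p ↔
      (∀ I ∈ C, IsLowerSet (↑I : Set (Fin 2 × Fin n))) ∧
      IsChain (· ⊆ ·) (↑C : Set (Finset (Fin 2 × Fin n))) ∧
      C.image Finset.card = S ∧ ∀ I ∈ C, I ⊆ p := by
  simp [chainsBelow]

/-- A chain below `p` whose ranks include the rank of `p` contains `p`; removing `p` loses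
nothing. -/
lemma card_chainsBelow_insert {n : ℕ} {S : Finset ℕ} {p : Finset (Fin 2 × Fin n)}
    (hp : IsLowerSet (↑p : Set (Fin 2 × Fin n))) (hS : p.card ∉ S) :
    (chainsBelow n (insert p.card S) p).card = (chainsBelow n S p).card := by
  have notMem : ∀ C ∈ chainsBelow n S p, p ∉ C := by
    intro C hC hpC
    rw [mem_chainsBelow] at hC
    exact hS (hC.2.2.1 ▸ Finset.mem_image_of_mem _ hpC)
  have eqp : ∀ C ∈ chainsBelow n (insert p.card S) p, ∀ I ∈ C, I.card = p.card → I = p := by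
    intro C hC I hI h
    rw [mem_chainsBelow] at hC
    exact Finset.eq_of_subset_of_card_le (hC.2.2.2 I hI) h.ge
  have isMem : ∀ C ∈ chainsBelow n (insert p.card S) p, p ∈ C := by
    intro C hC
    have h1 : p.card ∈ C.image Finset.card := by
      rw [(mem_chainsBelow.1 hC).2.2.1]; exact Finset.mem_insert_self _ _
    obtain ⟨I, hI, h⟩ := Finset.mem_image.1 h1
    exact eqp C hC I hI h ▸ hI
  refine Finset.card_bij' (fun C _ => C.erase p) (fun C _ => insert p C) ?_ ?_ ?_ ?_
  · intro C hC
    have hC' := mem_chainsBelow.1 hC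
    rw [mem_chainsBelow]
    refine ⟨fun I hI => hC'.1 I (Finset.mem_of_mem_erase hI),
      hC'.2.1.mono (by simp), ?_, fun I hI => hC'.2.2.2 I (Finset.mem_of_mem_erase hI)⟩
    ext k
    simp only [Finset.mem_image, Finset.mem_erase]
    constructor
    · rintro ⟨I, ⟨hne, hI⟩, rfl⟩
      have : I.card ∈ insert p.card S := hC'.2.2.1 ▸ Finset.mem_image_of_mem _ hI
      exact (Finset.mem_insert.1 this).resolve_left fun h => hne (eqp C hC I hI h)
    · intro hk
      have : k ∈ C.image Finset.card := by
        rw [hC'.2.2.1]; exact Finset.mem_insert_of_mem hk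
      obtain ⟨I, hI, rfl⟩ := Finset.mem_image.1 this
      exact ⟨I, ⟨by rintro rfl; exact hS hk, hI⟩, rfl⟩
  · intro C hC
    have hC' := mem_chainsBelow.1 hC
    rw [mem_chainsBelow]
    refine ⟨?_, ?_, ?_, ?_⟩
    · intro I hI
      rcases Finset.mem_insert.1 hI with rfl | hI
      · exact hp
      · exact hC'.1 I hI
    · rw [Finset.coe_insert]
      exact hC'.2.1.insert fun I hI _ => Or.inr (hC'.2.2.2 I hI)
    · rw [Finset.image_insert, hC'.2.2.1]
    · intro I hI
      rcases Finset.mem_insert.1 hI with rfl | hI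
      · exact subset_rfl
      · exact hC'.2.2.2 I hI
  · intro C hC
    exact Finset.insert_erase (isMem C hC)
  · intro C hC
    exact Finset.erase_insert (notMem C hC)

/-- The number of chains of lower sets below `ideal n a b` whose ranks are the elements of `T`
smaller than `a + b`. -/
noncomputable def chainCount (n : ℕ) (T : Finset ℕ) (a b : ℕ) : ℤ :=
  ((chainsBelow n (T.filter (· < a + b)) (ideal n a b)).card : ℤ)

/-- By `card_chainsBelow_insert` it does not matter whether the rank `a + b` of the top element is
itself required. -/
lemma chainCount_eq {n : ℕ} (T : Finset ℕ) {a b : ℕ} (hb : b ≤ a) (ha : a ≤ n) :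
    chainCount n T a b = ((chainsBelow n (T.filter (· < a + b + 1)) (ideal n a b)).card : ℤ) := by
  have hc := card_ideal ha (hb.trans ha)
  by_cases h : a + b ∈ T
  · have e : T.filter (· < a + b + 1) =
        insert (ideal n a b).card (T.filter (· < a + b)) := by
      ext k
      rw [hc, Finset.mem_insert, Finset.mem_filter, Finset.mem_filter]
      constructor
      · rintro ⟨h1, h2⟩
        rcases Nat.lt_or_ge k (a + b) with h3 | h3
        · exact Or.inr ⟨h1, h3⟩
        · exact Or.inl (by omega)
      · rintro (rfl | ⟨h1, h2⟩)
        · exact ⟨h, by omega⟩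
        · exact ⟨h1, by omega⟩
    rw [e, card_chainsBelow_insert (isLowerSet_ideal hb) (by simp [hc])]
    rfl
  · have e : T.filter (· < a + b + 1) = T.filter (· < a + b) := by
      refine Finset.filter_congr fun k hk => ?_
      have : k ≠ a + b := fun h' => h (h' ▸ hk)
      omega
    rw [e]
    rfl

lemma chainsBelow_mono {n : ℕ} {S : Finset ℕ} {p q : Finset (Fin 2 × Fin n)} (h : p ⊆ q) :
    chainsBelow n S p ⊆ chainsBelow n S q := by
  intro C hC
  rw [mem_chainsBelow] at hC ⊢
  exact ⟨hC.1, hC.2.1, hC.2.2.1, fun I hI => (hC.2.2.2 I hI).trans h⟩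

/-- The members of a chain with all ranks less than `a + b` that lie below `ideal n a b` are
proper subideals. -/
lemma exists_of_mem_chainsBelow {n a b : ℕ} {T : Finset ℕ} {C : Finset (Finset (Fin 2 × Fin n))}
    (hC : C ∈ chainsBelow n (T.filter (· < a + b)) (ideal n a b)) {I : Finset (Fin 2 × Fin n)}
    (hI : I ∈ C) :
    ∃ a' b', b' ≤ a' ∧ a' ≤ n ∧ a' ≤ a ∧ b' ≤ b ∧ a' + b' < a + b ∧ I = ideal n a' b' := by
  rw [mem_chainsBelow] at hC
  obtain ⟨a', b', h1, h2, rfl⟩ := exists_eq_ideal (hC.1 I hI)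
  have h3 := (ideal_subset_iff h2 (h1.trans h2)).1 (hC.2.2.2 _ hI)
  have h4 : (ideal n a' b').card ∈ T.filter (· < a + b) :=
    hC.2.2.1 ▸ Finset.mem_image_of_mem _ hI
  rw [card_ideal h2 (h1.trans h2), Finset.mem_filter] at h4
  exact ⟨a', b', h1, h2, h3.1, h3.2, h4.2, rfl⟩

/-- For `b < a` a chain strictly below `ideal n (a + 1) (b + 1)` lies below one of the two coatoms
`ideal n a (b + 1)` and `ideal n (a + 1) b`, and it lies below both exactly when it lies below their
intersection `ideal n a b`. The latter happens only if the chain avoids rank `a + b + 1`, which is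
the source of the factor `x (a + b + 1) - 1`. The ideals `ideal n (a + 1) 0` and
`ideal n (a + 1) (a + 1)` have a single coatom. -/
theorem ballotRec_chain (n : ℕ) (T : Finset ℕ) :
    BallotRec n (fun i => if i ∈ T then (1 : ℤ) else 0) (chainCount n T) where
  zero := by
    have : chainsBelow n (T.filter (· < 0 + 0)) (ideal n 0 0) = {∅} := by
      ext C
      rw [mem_chainsBelow, Finset.mem_singleton]
      constructor
      · intro h
        simpa using h.2.2.1
      · rintro rfl
        simp
    rw [chainCount, this]
    simp
  bottom a ha := by
    rw [chainCount_eq T (Nat.zero_le a) ha.le, chainCount]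
    congr 2
    apply Finset.Subset.antisymm
    · intro C hC
      have hC' := mem_chainsBelow.1 hC
      refine mem_chainsBelow.2 ⟨hC'.1, hC'.2.1, by convert hC'.2.2.1 using 3, fun I hI => ?_⟩
      obtain ⟨a', b', h1, h2, h3, h4, h5, rfl⟩ := exists_of_mem_chainsBelow hC hI
      exact (ideal_subset_iff h2 (by omega)).2 (by omega)
    · exact chainsBelow_mono ((ideal_subset_iff ha.le (by omega)).2 (by omega))
  diag a ha := by
    rw [chainCount_eq T (Nat.le_succ a) ha, chainCount]
    congr 2
    apply Finset.Subset.antisymm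
    · intro C hC
      have hC' := mem_chainsBelow.1 hC
      refine mem_chainsBelow.2 ⟨hC'.1, hC'.2.1, hC'.2.2.1, fun I hI => ?_⟩
      obtain ⟨a', b', h1, h2, h3, h4, h5, rfl⟩ := exists_of_mem_chainsBelow hC hI
      exact (ideal_subset_iff h2 (by omega)).2 (by omega)
    · exact chainsBelow_mono ((ideal_subset_iff ha (by omega)).2 (by omega))
  step a b ha hb := by
    rw [chainCount_eq T (by omega : b + 1 ≤ a) ha.le, chainCount_eq T (by omega : b ≤ a + 1) ha,
      show a + (b + 1) + 1 = a + 1 + (b + 1) by ring, show a + 1 + b + 1 = a + 1 + (b + 1) by ring]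
    set S := T.filter (· < a + 1 + (b + 1)) with hS
    have hunion : chainsBelow n S (ideal n (a + 1) (b + 1)) =
        chainsBelow n S (ideal n a (b + 1)) ∪ chainsBelow n S (ideal n (a + 1) b) := by
      apply Finset.Subset.antisymm
      · intro C hC
        have hC' := mem_chainsBelow.1 hC
        rw [Finset.mem_union]
        by_contra hcon
        rw [not_or, mem_chainsBelow, mem_chainsBelow] at hcon
        obtain ⟨hn1, hn2⟩ := hcon
        -- one member has `a + 1` elements in the bottom row, another `b + 1` in the top row
        have h1 : ∃ I ∈ C, ¬ I ⊆ ideal n a (b + 1) := by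
          by_contra h; push Not at h; exact hn1 ⟨hC'.1, hC'.2.1, hC'.2.2.1, h⟩
        have h2 : ∃ I ∈ C, ¬ I ⊆ ideal n (a + 1) b := by
          by_contra h; push Not at h; exact hn2 ⟨hC'.1, hC'.2.1, hC'.2.2.1, h⟩
        obtain ⟨I, hI, hI'⟩ := h1
        obtain ⟨J, hJ, hJ'⟩ := h2
        have htot := hC'.2.1.total hI hJ
        obtain ⟨a1, b1, p1, p2, p3, p4, p5, rfl⟩ := exists_of_mem_chainsBelow hC hI
        obtain ⟨a2, b2, q1, q2, q3, q4, q5, rfl⟩ := exists_of_mem_chainsBelow hC hJ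
        rw [ideal_subset_iff p2 (by omega)] at hI'
        rw [ideal_subset_iff q2 (by omega)] at hJ'
        rw [ideal_subset_iff p2 (by omega), ideal_subset_iff q2 (by omega)] at htot
        omega
      · apply Finset.union_subset
        · exact chainsBelow_mono ((ideal_subset_iff ha.le (by omega)).2 (by omega))
        · exact chainsBelow_mono ((ideal_subset_iff ha (by omega)).2 (by omega))
    have hinter : chainsBelow n S (ideal n a (b + 1)) ∩ chainsBelow n S (ideal n (a + 1) b) =
        chainsBelow n S (ideal n a b) := by
      ext C
      rw [Finset.mem_inter]
      constructor
      · rintro ⟨h1, h2⟩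
        rw [mem_chainsBelow] at h1 h2 ⊢
        refine ⟨h1.1, h1.2.1, h1.2.2.1, fun I hI p hp => ?_⟩
        have e1 := mem_ideal.1 (h1.2.2.2 I hI hp)
        have e2 := mem_ideal.1 (h2.2.2.2 I hI hp)
        rw [mem_ideal]
        split_ifs at e1 e2 ⊢ <;> omega
      · intro h
        exact ⟨chainsBelow_mono ((ideal_subset_iff ha.le (by omega)).2 (by omega)) h,
          chainsBelow_mono ((ideal_subset_iff ha.le (by omega)).2 (by omega)) h⟩
    have hcard := Finset.card_union_add_card_inter (chainsBelow n S (ideal n a (b + 1)))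
      (chainsBelow n S (ideal n (a + 1) b))
    rw [← hunion, hinter] at hcard
    have hlast : ((chainsBelow n S (ideal n a b)).card : ℤ) =
        -(((if a + b + 1 ∈ T then (1 : ℤ) else 0) - 1) * chainCount n T a b) := by
      split_ifs with h
      · -- a subideal of `ideal n a b` cannot have rank `a + b + 1`
        have : chainsBelow n S (ideal n a b) = ∅ := by
          rw [Finset.eq_empty_iff_forall_notMem]
          intro C hC
          rw [mem_chainsBelow] at hC
          have h1 : a + b + 1 ∈ C.image Finset.card := by
            rw [hC.2.2.1, hS, Finset.mem_filter]
            exact ⟨h, by omega⟩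
          obtain ⟨I, hI, hI'⟩ := Finset.mem_image.1 h1
          have := Finset.card_le_card (hC.2.2.2 I hI)
          rw [card_ideal ha.le (by omega)] at this
          omega
        rw [this]
        simp
      · have e : S = T.filter (· < a + b + 1) := by
          rw [hS]
          refine Finset.filter_congr fun k hk => ?_
          have : k ≠ a + b + 1 := fun h' => h (h' ▸ hk)
          omega
        rw [chainCount_eq T hb.le ha.le, e]
        ring
    have hc : chainCount n T (a + 1) (b + 1) =
        ((chainsBelow n S (ideal n (a + 1) (b + 1))).card : ℤ) := rfl
    rw [hc]
    have hcard' : ((chainsBelow n S (ideal n (a + 1) (b + 1))).card : ℤ) +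
        ((chainsBelow n S (ideal n a b)).card : ℤ) =
        ((chainsBelow n S (ideal n a (b + 1))).card : ℤ) +
        ((chainsBelow n S (ideal n (a + 1) b)).card : ℤ) := by exact_mod_cast hcard
    linarith

/-! ### The flag vectors -/

lemma flagAlpha_eq_chainCount {n : ℕ} (hn : 1 ≤ n) {T : Finset ℕ}
    (hT : T ⊆ Finset.Icc 1 (2 * n - 1)) : (flagAlpha n T : ℤ) = chainCount n T n n := by
  have e : T.filter (· < n + n) = T := by
    refine Finset.filter_true_of_mem fun k hk => ?_
    have := Finset.mem_Icc.1 (hT hk)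
    omega
  have hu : ideal n n n = Finset.univ := by
    ext p
    simp [mem_ideal]
  rw [chainCount, e, hu, flagAlpha, Nat.card_eq_fintype_card, Fintype.card_subtype]
  congr 2
  ext C
  rw [mem_chainsBelow]
  simp

/-- The number of chains with rank set `T` is the number of Dyck words with `LS w ⊆ T`. -/
lemma flagAlpha_eq {n : ℕ} (hn : 1 ≤ n) {T : Finset ℕ} (hT : T ⊆ Finset.Icc 1 (2 * n - 1)) :
    (flagAlpha n T : ℤ) =
      ∑ w : Fin (2 * n) → Bool, if IsDyck n w ∧ LSset w ⊆ T then 1 else 0 := by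
  rw [flagAlpha_eq_chainCount hn hT,
    (ballotRec_chain n T).unique (ballotRec_ls n _) n n le_rfl le_rfl, ← two_mul, ballotGF]
  refine Finset.sum_congr rfl fun w _ => ?_
  rw [isDyck_iff, LSset_eq, Finset.prod_ite_zero]
  simp only [Finset.prod_const_one, ← ite_and]
  rfl

/-- Inclusion–exclusion over the interval `[∅, S]`. -/
lemma sum_powerset_sign (S A : Finset ℕ) :
    ∑ T ∈ S.powerset, (-1 : ℤ) ^ (S.card - T.card) * (if A ⊆ T then 1 else 0) =
      if A = S then 1 else 0 := by
  by_cases hA : A ⊆ S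
  · have h := Finset.prod_add (fun _ => (1 : ℤ)) (fun i => if i ∈ A then (0 : ℤ) else -1) S
    have hl : ∏ i ∈ S, ((1 : ℤ) + if i ∈ A then 0 else -1) = if A = S then 1 else 0 := by
      have : ∀ i ∈ S, ((1 : ℤ) + if i ∈ A then 0 else -1) = if i ∈ A then 1 else 0 := by
        intro i _; split_ifs <;> norm_num
      rw [Finset.prod_congr rfl this, Finset.prod_ite_zero, Finset.prod_const_one]
      refine if_congr ⟨fun h => hA.antisymm h, fun h i hi => h ▸ hi⟩ rfl rfl
    rw [← hl, h]
    refine Finset.sum_congr rfl fun T hT => ?_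
    rw [Finset.mem_powerset] at hT
    rw [Finset.prod_const_one, one_mul, ← Finset.card_sdiff_of_subset hT]
    split_ifs with hAT
    · rw [mul_one, ← Finset.prod_const]
      refine Finset.prod_congr rfl fun i hi => (if_neg fun hi' => ?_).symm
      exact (Finset.mem_sdiff.1 hi).2 (hAT hi')
    · rw [mul_zero]
      obtain ⟨i, hi, hi'⟩ := Finset.not_subset.1 hAT
      exact (Finset.prod_eq_zero (f := fun i => if i ∈ A then (0 : ℤ) else -1)
        (Finset.mem_sdiff.2 ⟨hA hi, hi'⟩) (if_pos hi)).symm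
  · rw [if_neg fun h => hA h.subset]
    refine Finset.sum_eq_zero fun T hT => ?_
    rw [if_neg fun h => hA (h.trans (Finset.mem_powerset.1 hT)), mul_zero]

lemma flagBeta_eq_card_LS {n : ℕ} (hn : 1 ≤ n) {S : Finset ℕ}
    (hS : S ⊆ Finset.Icc 1 (2 * n - 1)) :
    flagBeta n S = Nat.card {w : Fin (2 * n) → Bool // IsDyck n w ∧ LSset w = S} := by
  have h1 : flagBeta n S = ∑ T ∈ S.powerset, ∑ w : Fin (2 * n) → Bool,
      (if IsDyck n w then
        (-1 : ℤ) ^ (S.card - T.card) * (if LSset w ⊆ T then 1 else 0) else 0) := by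
    refine Finset.sum_congr rfl fun T hT => ?_
    rw [flagAlpha_eq hn ((Finset.mem_powerset.1 hT).trans hS), Finset.mul_sum]
    refine Finset.sum_congr rfl fun w _ => ?_
    by_cases h : IsDyck n w <;> simp [h]
  rw [h1, Finset.sum_comm, Nat.card_eq_fintype_card, Fintype.card_subtype, Finset.card_filter]
  push_cast
  refine Finset.sum_congr rfl fun w _ => ?_
  by_cases h : IsDyck n w
  · simp only [h, if_true, true_and]
    exact sum_powerset_sign S (LSset w)
  · simp [h]

/-! ### The `q`-Narayana distribution -/

section Narayana

open Polynomial

/-- The generating polynomial `∑ z ^ |pos w| q ^ (∑ pos w)`: the inner variable of `ℚ[X][X]` is `q`,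
the outer one is `z`. -/
lemma coeff_ballotGF (pos : ∀ m, (Fin m → Bool) → Finset ℕ) (m a b k : ℕ) :
    (ballotGF pos (fun i => (C (X ^ i) * X : ℚ[X][X])) m a b).coeff k =
      ∑ w ∈ Finset.univ.filter
        (fun w : Fin m → Bool => IsBallot a b w ∧ (pos m w).card = k),
        (X : ℚ[X]) ^ (∑ i ∈ pos m w, i) := by
  rw [ballotGF, Polynomial.finsetSum_coeff, Finset.sum_filter]
  refine Finset.sum_congr rfl fun w _ => ?_
  by_cases h : IsBallot a b w
  · simp only [h, if_true, true_and]
    rw [Finset.prod_mul_distrib, Finset.prod_const, ← map_prod, Polynomial.coeff_C_mul,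
      Polynomial.coeff_X_pow, Finset.prod_pow_eq_pow_sum]
    split_ifs with h1 h2 h2
    · rw [mul_one]
    · exact absurd h1.symm h2
    · exact absurd h2.symm h1
    · rw [mul_zero]
  · simp [h]

/-- Gaussian binomial coefficients as polynomials, by the `q`-Pascal rule. -/
noncomputable def gauss : ℕ → ℕ → ℚ[X]
  | _, 0 => 1
  | 0, _ + 1 => 0
  | n + 1, k + 1 => gauss n (k + 1) + X ^ (n - k) * gauss n k

lemma gauss_zero_right (n : ℕ) : gauss n 0 = 1 := by cases n <;> rfl

lemma gauss_succ (n k : ℕ) :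
    gauss (n + 1) (k + 1) = gauss n (k + 1) + X ^ (n - k) * gauss n k := rfl

lemma gauss_eq_zero : ∀ {n k : ℕ}, n < k → gauss n k = 0
  | 0, _ + 1, _ => rfl
  | n + 1, k + 1, h => by
    rw [gauss_succ, gauss_eq_zero (by omega : n < k + 1), gauss_eq_zero (by omega : n < k)]; simp

/-- `q`-analogue of the number of ballot words ending at `(a, b)` with `k` descents. The first term
counts all words, the second one those that leave the ballot region. The second term is absent for
`k = 0`; its value at `a = 0` is irrelevant. -/
noncomputable def narCoeff (a b : ℕ) : ℕ → ℚ[X]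
  | 0 => 1
  | k + 1 => X ^ ((k + 1) ^ 2) *
      (gauss a (k + 1) * gauss b (k + 1) - gauss (a - 1) k * gauss (b + 1) (k + 2))

/-- The coefficient of `z ^ k` in the generating function by descents and major index. -/
noncomputable def desCoeff (a b k : ℕ) : ℚ[X] :=
  (ballotGF desPos (fun i => (C (X ^ i) * X : ℚ[X][X])) (a + b) a b).coeff k

lemma desCoeff_zero (k : ℕ) : desCoeff 0 0 k = if k = 0 then 1 else 0 := by
  have h := (ballotRec_des 0 (fun i => (C (X ^ i) * X : ℚ[X][X]))).zero
  rw [desCoeff, h, Polynomial.coeff_one]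

lemma desCoeff_bottom (a k : ℕ) : desCoeff (a + 1) 0 k = desCoeff a 0 k := by
  have h := (ballotRec_des (a + 1) (fun i => (C (X ^ i) * X : ℚ[X][X]))).bottom a (by omega)
  rw [desCoeff, desCoeff, h]

lemma desCoeff_diag (a k : ℕ) : desCoeff (a + 1) (a + 1) k = desCoeff (a + 1) a k := by
  have h := (ballotRec_des (a + 1) (fun i => (C (X ^ i) * X : ℚ[X][X]))).diag a (by omega)
  rw [desCoeff, desCoeff, h]

lemma desCoeff_step (a b k : ℕ) (hb : b < a) :
    desCoeff (a + 1) (b + 1) k = desCoeff a (b + 1) k + desCoeff (a + 1) b k - desCoeff a b k +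
      (match k with
        | 0 => 0
        | k + 1 => X ^ (a + b + 1) * desCoeff a b k) := by
  have h := (ballotRec_des (a + 1) (fun i => (C (X ^ i) * X : ℚ[X][X]))).step a b (by omega) hb
  unfold desCoeff
  rw [h, sub_mul, one_mul, Polynomial.coeff_add, Polynomial.coeff_add, Polynomial.coeff_sub,
    mul_assoc, Polynomial.coeff_C_mul]
  cases k with
  | zero => simp; ring
  | succ k => rw [Polynomial.coeff_X_mul]; ring

/-- The increment of a Gaussian binomial, with the exponent moved to the other side so that no
subtraction occurs. -/
lemma gauss_diff (n k : ℕ) : X ^ k * (gauss (n + 1) (k + 1) - gauss n (k + 1)) =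
    X ^ n * gauss n k := by
  rw [gauss_succ, add_sub_cancel_left]
  rcases Nat.lt_or_ge n k with h | h
  · simp [gauss_eq_zero h]
  · rw [← mul_assoc, ← pow_add, Nat.add_sub_cancel' h]

/-- The recursion is solved by a `q`-analogue of the reflection principle. The induction runs over
`a + b`, since the step refers to points at distance one and two. -/
lemma desCoeff_eq : ∀ s a b k : ℕ, a + b = s → b ≤ a → desCoeff a b k = narCoeff a b k := by
  intro s
  induction s using Nat.strong_induction_on with
  | _ s ih =>
    rintro (_ | a) (_ | b) k hs hb
    · rw [desCoeff_zero]
      cases k with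
      | zero => simp [narCoeff]
      | succ k => simp [narCoeff, gauss]
    · omega
    · rw [desCoeff_bottom, ih _ (by omega) a 0 k rfl (by omega)]
      cases k with
      | zero => simp [narCoeff]
      | succ k => simp [narCoeff, gauss]
    · rcases Nat.lt_or_ge b a with h | h
      · obtain ⟨a, rfl⟩ : ∃ a', a = a' + 1 := ⟨a - 1, by omega⟩
        rw [desCoeff_step _ _ _ h, ih _ (by omega) (a + 1) (b + 1) _ rfl (by omega),
          ih _ (by omega) (a + 1 + 1) b _ rfl (by omega),
          ih _ (by omega) (a + 1) b _ rfl (by omega)]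
        rcases k with _ | k
        · simp [narCoeff]
        · simp only
          rw [ih _ (by omega) (a + 1) b k rfl (by omega)]
          rcases k with _ | k
          · have h1 := gauss_diff (a + 1) 0
            have h2 := gauss_diff b 0
            simp only [narCoeff, gauss_zero_right, zero_add, pow_zero, one_mul, one_pow, pow_one,
              mul_one, Nat.add_sub_cancel] at h1 h2 ⊢
            linear_combination -(X * (gauss (b + 1) 1 - gauss b 1) * h1 + X ^ (a + 2) * h2)
          · have h1 := gauss_diff (a + 1) (k + 1)
            have h2 := gauss_diff b (k + 1)
            have h3 := gauss_diff a k
            have h4 := gauss_diff (b + 1) (k + 2)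
            simp only [narCoeff, Nat.add_sub_cancel]
            linear_combination -X ^ ((k + 1) ^ 2 + 1) *
              (X ^ (k + 1) * (gauss (b + 1) (k + 2) - gauss b (k + 2)) * h1
                + X ^ (a + 1) * gauss (a + 1) (k + 1) * h2
                - X ^ (k + 2) * (gauss (b + 2) (k + 3) - gauss (b + 1) (k + 3)) * h3
                - X ^ a * gauss a k * h4)
      · obtain rfl : b = a := by omega
        rw [desCoeff_diag, ih _ (by omega) (b + 1) b _ rfl (by omega)]
        rcases k with _ | k
        · simp [narCoeff]
        · simp only [narCoeff, Nat.add_sub_cancel]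
          rw [gauss_succ (b + 1) (k + 1), gauss_succ b k, Nat.add_sub_add_right]
          ring

lemma qInt_succ (m : ℕ) : qInt (m + 1) = qInt m + X ^ m := Finset.sum_range_succ _ _

lemma qInt_add (m k : ℕ) : qInt (m + k) = qInt m + X ^ m * qInt k := by
  induction k with
  | zero => simp [qInt]
  | succ k ih => rw [← add_assoc, qInt_succ, ih, qInt_succ]; ring

lemma qInt_ne_zero {m : ℕ} (hm : 1 ≤ m) : qInt m ≠ 0 := by
  intro h
  have h1 := congrArg (Polynomial.eval 1) h
  simp [qInt, Polynomial.eval_finsetSum] at h1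
  omega

lemma qFact_ne_zero (m : ℕ) : qFact m ≠ 0 := by
  induction m with
  | zero => simp [qFact]
  | succ m ih => exact mul_ne_zero (qInt_ne_zero (by omega)) ih

/-- The factorial formula for Gaussian binomials, free of division. -/
lemma gauss_mul_qFact : ∀ j k : ℕ, gauss (j + k) k * (qFact k * qFact j) = qFact (j + k) := by
  suffices ∀ s j k : ℕ, j + k = s → gauss (j + k) k * (qFact k * qFact j) = qFact (j + k) from
    fun j k => this _ j k rfl
  intro s
  induction s with
  | zero =>
    intro j k h
    obtain rfl : j = 0 := by omega
    obtain rfl : k = 0 := by omega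
    simp [gauss, qFact]
  | succ s ih =>
    intro j k h
    rcases k with _ | k
    · simp [gauss_zero_right, qFact]
    rcases j with _ | j
    · have h0 := ih 0 k (by omega)
      simp only [zero_add] at h0 ⊢
      rw [gauss_succ, gauss_eq_zero (Nat.lt_succ_self k), Nat.sub_self]
      simp only [qFact] at h0 ⊢
      linear_combination qInt (k + 1) * h0
    · have h1 := ih j (k + 1) (by omega)
      have h2 := ih (j + 1) k (by omega)
      have e1 : j + 1 + (k + 1) = (j + k + 1) + 1 := by ring
      rw [show j + (k + 1) = j + k + 1 by ring] at h1
      rw [show j + 1 + k = j + k + 1 by ring] at h2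
      have h3 := qInt_add (j + 1) (k + 1)
      rw [e1] at h3 ⊢
      rw [gauss_succ, show j + k + 1 - k = j + 1 by omega]
      simp only [qFact] at h1 h2 ⊢
      linear_combination qInt (j + 1) * h1 + X ^ (j + 1) * qInt (k + 1) * h2
        - qInt (j + k + 1) * qFact (j + k) * h3

lemma qbinom_eq {n k : ℕ} (h : k ≤ n) : qbinom n k = toRF (gauss n k) := by
  obtain ⟨j, rfl⟩ := Nat.exists_eq_add_of_le' h
  have hne : ∀ m, toRF (qFact m) ≠ 0 := fun m =>
    (map_ne_zero_iff _ (IsFractionRing.injective ℚ[X] (RatFunc ℚ))).2 (qFact_ne_zero m)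
  rw [qbinom, Nat.add_sub_cancel, div_eq_iff (mul_ne_zero (hne _) (hne _)), ← gauss_mul_qFact]
  simp [toRF]

lemma qInt_mul_gauss_succ_succ {n k : ℕ} (h : k ≤ n) :
    qInt (k + 1) * gauss (n + 1) (k + 1) = qInt (n + 1) * gauss n k := by
  obtain ⟨j, rfl⟩ := Nat.exists_eq_add_of_le' h
  refine mul_right_cancel₀ (mul_ne_zero (qFact_ne_zero k) (qFact_ne_zero j)) ?_
  have h1 := gauss_mul_qFact j k
  have h2 := gauss_mul_qFact j (k + 1)
  rw [← add_assoc] at h2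
  simp only [qFact] at h2
  linear_combination h2 - qInt (j + k + 1) * h1

lemma qInt_mul_gauss_succ (j k : ℕ) :
    qInt (k + 1) * gauss (j + k) (k + 1) = qInt j * gauss (j + k) k := by
  rcases j with _ | j
  · rw [gauss_eq_zero (by omega)]; simp [qInt]
  refine mul_right_cancel₀ (mul_ne_zero (qFact_ne_zero k) (qFact_ne_zero j)) ?_
  have h1 := gauss_mul_qFact (j + 1) k
  have h2 := gauss_mul_qFact j (k + 1)
  rw [show j + (k + 1) = j + 1 + k by ring] at h2
  simp only [qFact] at h1 h2
  linear_combination h2 - h1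

/-- The determinantal form of the `q`-Narayana polynomial agrees with its product form. -/
lemma qInt_mul_narCoeff {n k : ℕ} (hk : k + 1 ≤ n) :
    qInt n * narCoeff n n k = gauss n k * gauss n (k + 1) * X ^ (k ^ 2 + k) := by
  rcases k with _ | k
  · have h := qInt_mul_gauss_succ n 0
    simp only [add_zero, zero_add, gauss_zero_right] at h
    have h1 : qInt 1 = 1 := by simp [qInt]
    rw [h1] at h
    simp only [narCoeff, gauss_zero_right, zero_add]
    linear_combination -h
  · obtain ⟨j, rfl⟩ : ∃ j, n = j + k + 1 := ⟨n - (k + 1), by omega⟩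
    refine mul_left_cancel₀ (qInt_ne_zero (by omega : 1 ≤ k + 1 + 1)) ?_
    simp only [narCoeff, Nat.add_sub_cancel]
    have h1 := qInt_mul_gauss_succ_succ (by omega : k ≤ j + k)
    have h2 := qInt_mul_gauss_succ_succ (by omega : k + 1 ≤ j + k + 1)
    have h3 := qInt_mul_gauss_succ j (k + 1)
    rw [← add_assoc] at h3
    -- `[n][k+2] - [k+1][n+1] = q ^ (k+1) [n-k-1]` for `n = j + k + 1`
    have key : qInt (j + k + 1) * qInt (k + 1 + 1) - qInt (k + 1) * qInt (j + k + 1 + 1) =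
        X ^ (k + 1) * qInt j := by
      have e1 := qInt_add j (k + 1)
      have e2 := qInt_add (k + 1) j
      rw [show k + 1 + j = j + k + 1 by ring] at e2
      rw [← add_assoc] at e1
      rw [qInt_succ (k + 1), qInt_succ (j + k + 1)]
      linear_combination X ^ (k + 1) * e1
    linear_combination X ^ ((k + 1) ^ 2) * (gauss (j + k + 1) (k + 1)) ^ 2 * key
      - X ^ ((k + 1) ^ 2 + (k + 1)) * gauss (j + k + 1) (k + 1) * h3
      - X ^ ((k + 1) ^ 2) * qInt (j + k + 1) * gauss (j + k) k * h2
      + X ^ ((k + 1) ^ 2) * qInt (j + k + 1 + 1) * gauss (j + k + 1) (k + 1) * h1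

/-- Long non-final sequences and descents obey the same recursion, so their joint distributions of
cardinality and sum of positions coincide. -/
lemma sum_LS_eq_coeff (n k : ℕ) :
    ∑ w ∈ Finset.univ.filter
        (fun w : Fin (2 * n) → Bool => IsDyck n w ∧ (LSset w).card = k),
        (X : ℚ[X]) ^ (∑ i ∈ LSset w, i) = desCoeff n n k := by
  have h := (ballotRec_ls n (fun i => (C (X ^ i) * X : ℚ[X][X]))).unique
    (ballotRec_des n _) n n le_rfl le_rfl
  rw [desCoeff, ← h, ← two_mul, coeff_ballotGF]
  simp only [isDyck_iff, LSset_eq]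

lemma sum_Des_eq_coeff (n k : ℕ) :
    ∑ w ∈ Finset.univ.filter
        (fun w : Fin (2 * n) → Bool => IsDyck n w ∧ (Des w).card = k),
        (X : ℚ[X]) ^ (∑ i ∈ Des w, i) = desCoeff n n k := by
  rw [desCoeff, ← two_mul, coeff_ballotGF]
  simp only [isDyck_iff, Des_eq]

end Narayana

/-- For `n ≥ 1` the flag `h`-vector of `J(2 × n)` satisfies
`β_n(S) = #{w ∈ 𝒟_n : LS(w) = S}`; consequently the bi-statistic
`(lnfs, maj_ℓ)` has the `q`-Narayana distribution: it is equidistributed with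
`(des, maj)` and `Σ_{lnfs w = k} q^(maj_ℓ w) = N_q(n,k)
= (1/[n]) [n choose k]_q [n choose k+1]_q q^(k²+k)`. -/
theorem flagBeta_eq_card_LS_and_qNarayana (n : ℕ) (hn : 1 ≤ n) :
    (∀ S : Finset ℕ, S ⊆ Finset.Icc 1 (2 * n - 1) →
      flagBeta n S =
        Nat.card {w : Fin (2 * n) → Bool // IsDyck n w ∧ LSset w = S}) ∧
    (∀ k : ℕ,
      ∑ w ∈ Finset.univ.filter
          (fun w : Fin (2 * n) → Bool => IsDyck n w ∧ (LSset w).card = k),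
          (Polynomial.X : Polynomial ℚ) ^ (∑ i ∈ LSset w, i) =
        ∑ w ∈ Finset.univ.filter
            (fun w : Fin (2 * n) → Bool => IsDyck n w ∧ (Des w).card = k),
            (Polynomial.X : Polynomial ℚ) ^ (∑ i ∈ Des w, i)) ∧
    (∀ k : ℕ, k ≤ n - 1 →
      toRF (∑ w ∈ Finset.univ.filter
          (fun w : Fin (2 * n) → Bool => IsDyck n w ∧ (LSset w).card = k),
          (Polynomial.X : Polynomial ℚ) ^ (∑ i ∈ LSset w, i)) =
        (1 / toRF (qInt n)) * qbinom n k * qbinom n (k + 1) *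
          toRF (Polynomial.X ^ (k ^ 2 + k))) := by
  refine ⟨fun S hS => flagBeta_eq_card_LS hn hS, fun k => ?_, fun k hk => ?_⟩
  · rw [sum_LS_eq_coeff, sum_Des_eq_coeff]
  · have hne : toRF (qInt n) ≠ 0 :=
      (map_ne_zero_iff _ (IsFractionRing.injective (Polynomial ℚ) (RatFunc ℚ))).2
        (qInt_ne_zero hn)
    rw [sum_LS_eq_coeff, desCoeff_eq _ n n k rfl le_rfl, qbinom_eq (by omega), qbinom_eq (by omega)]
    have h := congrArg toRF (qInt_mul_narCoeff (by omega : k + 1 ≤ n))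
    simp only [toRF, map_mul] at h hne ⊢
    field_simp
    linear_combination h
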